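/- (Remark 2.9: tensorization of T_1 without contraction.) Let (E,d) be a Polish metric space and ℙ a probability measure on E^n with P_i(·|x^{i-1}) ∈ T_1(C) for all i, x^{i-1}, and suppose W_1^d(P_i(·|x^{i-1}), P_i(·|x̃^{i-1})) ≤ Σ_{j=1}^{i-1} a_j · d(x_{i-j}, x̃_{i-j}) for some a_j ≥ 0 (no smallness assumption on Σ a_j). Then for any δ ∈ (0,1) there exists a vector z = (z_1,…,z_n) with z_i > 0, Σ_i z_i = 1 and Σ_{i=k+1}^n z_i a_{i−k} ≤ δ z_k for all k = 1,…,n; and for any such z and every probability measure ℚ on E^n, W_1^{d_{l_1}}(ℚ,ℙ) ≤ (1/((1−δ)·min_i z_i)) · √(2C·(max_i z_i)·H(ℚ|ℙ)). In particular ℙ satisfies T_1(C_n) on (E^n, d_{l_1}) for some finite constant C_n. -/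

import Mathlib

open MeasureTheory ProbabilityTheory ENNReal

noncomputable section

/-- `π` is a coupling of `μ` and `ν`. -/
def IsCoupling {E F : Type*} [MeasurableSpace E] [MeasurableSpace F]
    (π : Measure (E × F)) (μ : Measure E) (ν : Measure F) : Prop :=
  π.map Prod.fst = μ ∧ π.map Prod.snd = ν

/-- The `L^p`-Wasserstein distance associated to the cost function `d`, valued in `ℝ≥0∞`. -/
def wassersteinDist {E : Type*} [MeasurableSpace E] (p : ℝ) (d : E → E → ℝ)
    (μ ν : Measure E) : ℝ≥0∞ :=
  ⨅ (π : Measure (E × E)) (_ : IsCoupling π μ ν),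
    (∫⁻ z, ENNReal.ofReal (d z.1 z.2) ^ p ∂π) ^ (1 / p)

/-- The `L^p`-Wasserstein distance for an extended (`ℝ≥0∞`-valued) pseudo-metric `d`. -/
def wassersteinDistE {E : Type*} [MeasurableSpace E] (p : ℝ) (d : E → E → ℝ≥0∞)
    (μ ν : Measure E) : ℝ≥0∞ :=
  ⨅ (π : Measure (E × E)) (_ : IsCoupling π μ ν),
    (∫⁻ z, d z.1 z.2 ^ p ∂π) ^ (1 / p)

open Classical in
/-- Relative entropy (Kullback information) `H(ν | μ)`, valued in `ℝ≥0∞`. -/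
def relEntropy {E : Type*} [MeasurableSpace E] (ν μ : Measure E) : ℝ≥0∞ :=
  if ν ≪ μ ∧ Integrable (fun x => Real.log ((ν.rnDeriv μ x).toReal)) ν then
    ENNReal.ofReal (∫ x, Real.log ((ν.rnDeriv μ x).toReal) ∂ν)
  else ∞

/-- The transportation cost-information inequality `T_p(C)` for `μ` on `(E, d)`:
`W_p(μ, ν) ≤ √(2 C H(ν|μ))` for every probability measure `ν`, written in the equivalent
squared form `W_p(μ,ν)² ≤ 2C·H(ν|μ)` in `ℝ≥0∞`. -/
def TpIneq {E : Type*} [MeasurableSpace E] (p : ℝ) (d : E → E → ℝ) (C : ℝ)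
    (μ : Measure E) : Prop :=
  ∀ ν : Measure E, IsProbabilityMeasure ν →
    wassersteinDist p d μ ν ^ 2 ≤ ENNReal.ofReal (2 * C) * relEntropy ν μ

/-- The transportation cost-information inequality `T_p(C)` for an extended pseudo-metric. -/
def TpIneqE {E : Type*} [MeasurableSpace E] (p : ℝ) (d : E → E → ℝ≥0∞) (C : ℝ)
    (μ : Measure E) : Prop :=
  ∀ ν : Measure E, IsProbabilityMeasure ν →
    wassersteinDistE p d μ ν ^ 2 ≤ ENNReal.ofReal (2 * C) * relEntropy ν μ

/-- The law on `E^n` of the (in general non-homogeneous, non-Markovian) random sequence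
determined by the successive regular conditional laws `K i : (Fin i → E) → Measure E`
of the `(i+1)`-th coordinate given the first `i` coordinates. -/
def chainMeasure {E : Type*} [MeasurableSpace E]
    (K : (i : ℕ) → (Fin i → E) → Measure E) : (n : ℕ) → Measure (Fin n → E)
  | 0 => Measure.dirac (fun i => i.elim0)
  | n + 1 => (chainMeasure K n).bind fun x => (K n x).map (Fin.snoc x)

/-!
A measure satisfies `T₁(A)` for a metric cost if and only if its bounded Lipschitz functions have
Gaussian moment generating functions with variance proxy `A` (Bobkov–Götze), and it is this dual
form which tensorizes. Let `f` be a function on `E^n` whose Lipschitz constant in the `j`-th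
coordinate is `L j`. Integrating `f` against the conditional law of the last coordinate, scaled by a
weight `g n ≥ L n`, costs the factor `exp (C * g n ^ 2 * t ^ 2 / 2)` and leaves a function of the
first `n - 1` coordinates with Lipschitz constants `L j + g n * a (n - j)`. Induction bounds the
variance proxy by `C * ∑ k, g k ^ 2` as soon as `L k + ∑ i > k, g i * a (i - k) ≤ g k` for all `k`.
For `L = 1` the condition on `z` says precisely that `g k = z k / ((1 - δ) * min z)` is admissible,
and `∑ k, z k ^ 2 ≤ max z`. Geometric weights `z k ∝ r ^ k` with small `r` exist for every `a`.

The way back to `T₁` is Kantorovich–Rubinstein duality: on finite sets it is the Hahn–Banach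
theorem, and on a separable space the measures are quantized to finitely many points of a dense
sequence, with an error that vanishes because concentration forces a finite first moment.
-/

/-- `f` is measurable, bounded, and `1`-Lipschitz for the cost `ρ`, in the one-sided form
`f x - f y ≤ ρ x y`, which is meaningful for any `ρ`: the test functions of Kantorovich duality. -/
structure IsBoundedLipschitz {X : Type*} [MeasurableSpace X] (ρ : X → X → ℝ) (f : X → ℝ) :
    Prop where
  measurable : Measurable f
  bounded : ∃ B, ∀ x, |f x| ≤ B
  sub_le : ∀ x y, f x - f y ≤ ρ x y

namespace IsBoundedLipschitz

variable {X Y : Type*} [MeasurableSpace X] [MeasurableSpace Y] {ρ : X → X → ℝ} {f : X → ℝ}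

theorem integrable (hf : IsBoundedLipschitz ρ f) (μ : Measure X) [IsFiniteMeasure μ] :
    Integrable f μ := by
  obtain ⟨B, hB⟩ := hf.bounded
  exact .of_bound hf.measurable.aestronglyMeasurable B (.of_forall hB)

theorem const_mul (hf : IsBoundedLipschitz ρ f) {c : ℝ} (hc : 0 ≤ c) :
    IsBoundedLipschitz (fun x y => c * ρ x y) (fun x => c * f x) where
  measurable := hf.measurable.const_mul c
  bounded := by
    obtain ⟨B, hB⟩ := hf.bounded
    refine ⟨c * B, fun x => ?_⟩
    rw [abs_mul, abs_of_nonneg hc]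
    exact mul_le_mul_of_nonneg_left (hB x) hc
  sub_le x y := by
    rw [← mul_sub]
    exact mul_le_mul_of_nonneg_left (hf.sub_le x y) hc

theorem neg (hf : IsBoundedLipschitz ρ f) (hρ : ∀ x y, ρ x y = ρ y x) :
    IsBoundedLipschitz ρ (fun x => -f x) where
  measurable := hf.measurable.neg
  bounded := by simpa using hf.bounded
  sub_le x y := by simpa [hρ x y, neg_add_eq_sub] using hf.sub_le y x

theorem comp (hf : IsBoundedLipschitz ρ f) {σ : Y → Y → ℝ} {g : Y → X} (hg : Measurable g)
    (hle : ∀ y y', ρ (g y) (g y') ≤ σ y y') : IsBoundedLipschitz σ (fun y => f (g y)) where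
  measurable := hf.measurable.comp hg
  bounded := hf.bounded.imp fun _ hB y => hB (g y)
  sub_le y y' := (hf.sub_le _ _).trans (hle y y')

theorem integrable_exp_mul (hf : IsBoundedLipschitz ρ f) (μ : Measure X) [IsFiniteMeasure μ]
    (t : ℝ) : Integrable (fun x => Real.exp (t * f x)) μ := by
  obtain ⟨B, hB⟩ := hf.bounded
  refine integrable_exp_mul_of_mem_Icc (a := -B) (b := B) hf.measurable.aemeasurable
    (.of_forall fun x => ?_)
  exact abs_le.1 (hB x)

end IsBoundedLipschitz

theorem ofReal_integral_le_lintegral_ofReal {X : Type*} [MeasurableSpace X] {μ : Measure X}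
    {f : X → ℝ} (hf : Integrable f μ) :
    ENNReal.ofReal (∫ x, f x ∂μ) ≤ ∫⁻ x, ENNReal.ofReal (f x) ∂μ := by
  refine ENNReal.ofReal_le_of_le_toReal ?_
  rw [integral_eq_lintegral_pos_part_sub_lintegral_neg_part hf]
  exact sub_le_self _ ENNReal.toReal_nonneg

section Wasserstein

variable {X : Type*} [MeasurableSpace X] {d : X → X → ℝ} {μ ν : Measure X} {f : X → ℝ}

theorem wassersteinDist_one (d : X → X → ℝ) (μ ν : Measure X) :
    wassersteinDist 1 d μ ν =
      ⨅ (π : Measure (X × X)) (_ : IsCoupling π μ ν), ∫⁻ z, ENNReal.ofReal (d z.1 z.2) ∂π := by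
  simp [wassersteinDist]

theorem IsCoupling.swap {π : Measure (X × X)} (h : IsCoupling π μ ν) :
    IsCoupling (π.map Prod.swap) ν μ := by
  constructor
  · rw [Measure.map_map measurable_fst measurable_swap]
    exact h.2
  · rw [Measure.map_map measurable_snd measurable_swap]
    exact h.1

theorem wassersteinDist_one_comm (hd : ∀ x y, d x y = d y x)
    (hdm : Measurable fun z : X × X => d z.1 z.2) (μ ν : Measure X) :
    wassersteinDist 1 d μ ν = wassersteinDist 1 d ν μ := by
  have hle (μ ν : Measure X) : wassersteinDist 1 d μ ν ≤ wassersteinDist 1 d ν μ := by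
    rw [wassersteinDist_one, wassersteinDist_one]
    refine le_iInf₂ fun π hπ => (iInf₂_le (π.map Prod.swap) hπ.swap).trans_eq ?_
    rw [lintegral_map hdm.ennreal_ofReal measurable_swap]
    simp only [Prod.fst_swap, Prod.snd_swap, hd]
  exact le_antisymm (hle μ ν) (hle ν μ)

theorem wassersteinDist_one_const_mul {c : ℝ} (hc : 0 < c) (d : X → X → ℝ) (μ ν : Measure X) :
    wassersteinDist 1 (fun x y => c * d x y) μ ν = ENNReal.ofReal c * wassersteinDist 1 d μ ν := by
  simp_rw [wassersteinDist_one, ENNReal.ofReal_mul hc.le,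
    lintegral_const_mul' _ _ ENNReal.ofReal_ne_top,
    ENNReal.mul_iInf_of_ne (ENNReal.ofReal_pos.2 hc).ne' ENNReal.ofReal_ne_top]

namespace IsBoundedLipschitz

theorem ofReal_integral_sub_le_wassersteinDist (hf : IsBoundedLipschitz d f)
    (μ ν : Measure X) [IsFiniteMeasure μ] [IsFiniteMeasure ν] :
    ENNReal.ofReal (∫ x, f x ∂μ - ∫ x, f x ∂ν) ≤ wassersteinDist 1 d μ ν := by
  rw [wassersteinDist_one]
  refine le_iInf₂ fun π hπ => ?_
  have hμ : MeasurePreserving Prod.fst π μ := ⟨measurable_fst, hπ.1⟩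
  have hν : MeasurePreserving Prod.snd π ν := ⟨measurable_snd, hπ.2⟩
  have hfst : Integrable (fun z => f z.1) π := hμ.integrable_comp_of_integrable (hf.integrable μ)
  have hsnd : Integrable (fun z => f z.2) π := hν.integrable_comp_of_integrable (hf.integrable ν)
  calc ENNReal.ofReal (∫ x, f x ∂μ - ∫ x, f x ∂ν)
      = ENNReal.ofReal (∫ z, (f z.1 - f z.2) ∂π) := by
        rw [integral_sub hfst hsnd, ← hπ.1, ← hπ.2,
          integral_map hμ.aemeasurable hf.measurable.aestronglyMeasurable,
          integral_map hν.aemeasurable hf.measurable.aestronglyMeasurable]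
    _ ≤ ∫⁻ z, ENNReal.ofReal (f z.1 - f z.2) ∂π :=
        ofReal_integral_le_lintegral_ofReal (hfst.sub hsnd)
    _ ≤ ∫⁻ z, ENNReal.ofReal (d z.1 z.2) ∂π :=
        lintegral_mono fun z => ENNReal.ofReal_le_ofReal (hf.sub_le z.1 z.2)

theorem ofReal_abs_integral_sub_le_wassersteinDist (hf : IsBoundedLipschitz d f)
    (hd : ∀ x y, d x y = d y x) (μ ν : Measure X) [IsFiniteMeasure μ] [IsFiniteMeasure ν] :
    ENNReal.ofReal |∫ x, f x ∂μ - ∫ x, f x ∂ν| ≤ wassersteinDist 1 d μ ν := by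
  have hneg := (hf.neg hd).ofReal_integral_sub_le_wassersteinDist μ ν
  rw [integral_neg, integral_neg, neg_sub_neg, ← neg_sub] at hneg
  rw [abs_eq_max_neg, ENNReal.ofReal_max]
  exact max_le (hf.ofReal_integral_sub_le_wassersteinDist μ ν) hneg

end IsBoundedLipschitz

end Wasserstein

section Entropy

variable {X : Type*} [MeasurableSpace X] {μ ν : Measure X} [IsProbabilityMeasure μ] {f : X → ℝ}

theorem relEntropy_eq_klDiv (ν μ : Measure X) [IsProbabilityMeasure ν] [IsProbabilityMeasure μ] :
    relEntropy ν μ = InformationTheory.klDiv ν μ := by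
  unfold relEntropy
  split_ifs with h
  · simp [InformationTheory.klDiv_of_ac_of_integrable h.1 h.2, llr]
  · refine (not_ne_iff.1 fun h' => h ?_).symm
    exact InformationTheory.klDiv_ne_top_iff.1 h'

theorem integral_le_toReal_relEntropy_add_log [IsProbabilityMeasure ν] (h : relEntropy ν μ ≠ ∞)
    (hf : Integrable f ν) (hexp : Integrable (fun x => Real.exp (f x)) μ) :
    ∫ x, f x ∂ν ≤ (relEntropy ν μ).toReal + Real.log (∫ x, Real.exp (f x) ∂μ) := by
  rw [relEntropy_eq_klDiv] at h ⊢
  obtain ⟨hac, hllr⟩ := InformationTheory.klDiv_ne_top_iff.1 h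
  have := isProbabilityMeasure_tilted hexp
  have hgibbs := InformationTheory.integral_llr_add_sub_measure_univ_nonneg
    (hac.trans (absolutelyContinuous_tilted hexp))
    (integrable_llr_tilted_right hac hf hllr hexp)
  simp only [probReal_univ, add_sub_cancel_right] at hgibbs
  rw [InformationTheory.toReal_klDiv_of_measure_eq hac (by simp)]
  linarith [integral_llr_tilted_right hac hf hexp hllr]

theorem llr_tilted_ae_eq (hexp : Integrable (fun x => Real.exp (f x)) μ) :
    llr (μ.tilted f) μ =ᵐ[μ.tilted f] fun x => f x - Real.log (∫ x, Real.exp (f x) ∂μ) :=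
  (tilted_absolutelyContinuous μ f).ae_le (log_rnDeriv_tilted_left_self hexp)

theorem relEntropy_tilted_ne_top (hexp : Integrable (fun x => Real.exp (f x)) μ)
    (hf : Integrable f (μ.tilted f)) : relEntropy (μ.tilted f) μ ≠ ∞ := by
  have := isProbabilityMeasure_tilted hexp
  rw [relEntropy_eq_klDiv]
  exact InformationTheory.klDiv_ne_top (tilted_absolutelyContinuous μ f)
    ((hf.sub (integrable_const _)).congr (llr_tilted_ae_eq hexp).symm)

theorem toReal_relEntropy_tilted (hexp : Integrable (fun x => Real.exp (f x)) μ)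
    (hf : Integrable f (μ.tilted f)) :
    (relEntropy (μ.tilted f) μ).toReal =
      ∫ x, f x ∂(μ.tilted f) - Real.log (∫ x, Real.exp (f x) ∂μ) := by
  have := isProbabilityMeasure_tilted hexp
  rw [relEntropy_eq_klDiv, InformationTheory.toReal_klDiv_of_measure_eq
    (tilted_absolutelyContinuous μ f) (by simp), integral_congr_ae (llr_tilted_ae_eq hexp),
    integral_sub hf (integrable_const _)]
  simp

end Entropy

/-! ### Transport inequalities and Gaussian concentration -/

section TransportCost

variable {X : Type*} [MeasurableSpace X] {d : X → X → ℝ} {C : ℝ} {μ ν : Measure X} {f : X → ℝ}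

namespace TpIneq

theorem sq_integral_sub_le (hT : TpIneq 1 d C μ) (hd : ∀ x y, d x y = d y x) (hC : 0 ≤ C)
    [IsFiniteMeasure μ] [IsProbabilityMeasure ν] (h : relEntropy ν μ ≠ ∞)
    (hf : IsBoundedLipschitz d f) :
    (∫ x, f x ∂μ - ∫ x, f x ∂ν) ^ 2 ≤ 2 * C * (relEntropy ν μ).toReal := by
  rw [← ENNReal.ofReal_le_ofReal_iff (by positivity), ← sq_abs, ENNReal.ofReal_pow (abs_nonneg _),
    ENNReal.ofReal_mul (by positivity), ENNReal.ofReal_toReal h]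
  calc ENNReal.ofReal |∫ x, f x ∂μ - ∫ x, f x ∂ν| ^ 2
      ≤ wassersteinDist 1 d μ ν ^ 2 := by
        gcongr
        exact hf.ofReal_abs_integral_sub_le_wassersteinDist hd μ ν
    _ ≤ ENNReal.ofReal (2 * C) * relEntropy ν μ := hT ν inferInstance

theorem wassersteinDist_le (hT : TpIneq 1 d C μ) [IsProbabilityMeasure ν] {b M : ℝ} (hb : 0 ≤ b)
    (hC : 2 * C = b ^ 2 * M) :
    wassersteinDist 1 d μ ν ≤
      ENNReal.ofReal b * (ENNReal.ofReal M * relEntropy ν μ) ^ (1 / 2 : ℝ) := by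
  have hsq (u : ℝ≥0∞) : (u ^ 2) ^ (1 / 2 : ℝ) = u := by
    rw [one_div]
    exact ENNReal.pow_rpow_inv_natCast two_ne_zero u
  calc wassersteinDist 1 d μ ν = (wassersteinDist 1 d μ ν ^ 2) ^ (1 / 2 : ℝ) := (hsq _).symm
    _ ≤ (ENNReal.ofReal (2 * C) * relEntropy ν μ) ^ (1 / 2 : ℝ) := by
        gcongr
        exact hT ν inferInstance
    _ = ENNReal.ofReal b * (ENNReal.ofReal M * relEntropy ν μ) ^ (1 / 2 : ℝ) := by
        rw [hC, ENNReal.ofReal_mul (by positivity), mul_assoc, ENNReal.ofReal_pow hb,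
          ENNReal.mul_rpow_of_nonneg _ _ (by norm_num), hsq]

end TpIneq

end TransportCost

/-- `μ` has Gaussian concentration with variance proxy `A` for the cost `ρ`: the moment generating
function of every bounded `ρ`-Lipschitz function is at most that of a Gaussian variable with the
same mean and variance `A`. For a metric cost this is the dual form of `T₁(A)`. -/
def HasGaussianConcentration {X : Type*} [MeasurableSpace X] (ρ : X → X → ℝ) (A : ℝ)
    (μ : Measure X) : Prop :=
  ∀ f, IsBoundedLipschitz ρ f → ∀ t, mgf f μ t ≤ Real.exp (t * (∫ x, f x ∂μ) + A * t ^ 2 / 2)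

theorem TpIneq.hasGaussianConcentration {X : Type*} [MeasurableSpace X] {d : X → X → ℝ} {C : ℝ}
    {μ : Measure X} [IsProbabilityMeasure μ] (hT : TpIneq 1 d C μ) (hd : ∀ x y, d x y = d y x)
    (hC : 0 ≤ C) : HasGaussianConcentration d C μ := by
  intro f hf t
  have hexp := hf.integrable_exp_mul μ t
  have := isProbabilityMeasure_tilted hexp
  have hint := (hf.integrable (μ.tilted fun x => t * f x)).const_mul t
  have hfin := relEntropy_tilted_ne_top hexp hint
  have hent := toReal_relEntropy_tilted hexp hint
  have hsq := hT.sq_integral_sub_le hd hC hfin hf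
  rw [integral_const_mul] at hent
  set ν := μ.tilted fun x => t * f x
  set H := (relEntropy ν μ).toReal
  have : 0 ≤ H := ENNReal.toReal_nonneg
  have hmean : t * (∫ x, f x ∂ν - ∫ x, f x ∂μ) ≤ H + C * t ^ 2 / 2 := by
    refine le_of_sq_le_sq ?_ (by positivity)
    calc (t * (∫ x, f x ∂ν - ∫ x, f x ∂μ)) ^ 2
        = t ^ 2 * (∫ x, f x ∂μ - ∫ x, f x ∂ν) ^ 2 := by ring
      _ ≤ t ^ 2 * (2 * C * H) := by gcongr
      _ = 4 * H * (C * t ^ 2 / 2) := by ring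
      _ ≤ (H + C * t ^ 2 / 2) ^ 2 := four_mul_le_sq_add H (C * t ^ 2 / 2)
  rw [← Real.log_le_iff_le_exp (mgf_pos hexp), mgf]
  linarith

namespace IsBoundedLipschitz

variable {X Y : Type*} [MeasurableSpace X] [MeasurableSpace Y] {ρ r : X → X → ℝ} {d : Y → Y → ℝ}
  {f : X × Y → ℝ} {κ : Kernel X Y}

theorem section_right (hf : IsBoundedLipschitz (fun p q => ρ p.1 q.1 + d p.2 q.2) f)
    (hρ : ∀ x, ρ x x = 0) (x : X) : IsBoundedLipschitz d fun y => f (x, y) :=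
  hf.comp measurable_prodMk_left fun y y' => by simp [hρ]

theorem integral_kernel [IsMarkovKernel κ]
    (hf : IsBoundedLipschitz (fun p q => ρ p.1 q.1 + d p.2 q.2) f) (hρ : ∀ x, ρ x x = 0)
    (hd : ∀ y, d y y = 0) (hr : ∀ x x', 0 ≤ r x x')
    (hκ : ∀ x x', wassersteinDist 1 d (κ x) (κ x') ≤ ENNReal.ofReal (r x x')) :
    IsBoundedLipschitz (fun x x' => ρ x x' + r x x') fun x => ∫ y, f (x, y) ∂(κ x) where
  measurable := (hf.measurable.stronglyMeasurable.integral_kernel_prod_right' (κ := κ)).measurable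
  bounded := by
    obtain ⟨B, hB⟩ := hf.bounded
    refine ⟨B, fun x => ?_⟩
    have hle : ∀ᵐ y ∂(κ x), ‖f (x, y)‖ ≤ B := .of_forall fun y => hB (x, y)
    simpa using norm_integral_le_of_norm_le_const hle
  sub_le x x' := by
    have hint (x : X) (μ : Measure Y) [IsFiniteMeasure μ] : Integrable (fun y => f (x, y)) μ :=
      (hf.section_right hρ x).integrable μ
    have hmove : ∫ y, f (x, y) ∂(κ x) - ∫ y, f (x', y) ∂(κ x) ≤ ρ x x' := by
      rw [← integral_sub (hint x _) (hint x' _)]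
      refine (integral_mono ((hint x _).sub (hint x' _)) (integrable_const (ρ x x'))
        fun y => ?_).trans_eq (by simp)
      simpa [hd] using hf.sub_le (x, y) (x', y)
    have hswitch : ∫ y, f (x', y) ∂(κ x) - ∫ y, f (x', y) ∂(κ x') ≤ r x x' := by
      rw [← ENNReal.ofReal_le_ofReal_iff (hr x x')]
      exact ((hf.section_right hρ x').ofReal_integral_sub_le_wassersteinDist _ _).trans (hκ x x')
    linarith

end IsBoundedLipschitz

namespace HasGaussianConcentration

variable {X Y : Type*} [MeasurableSpace X] [MeasurableSpace Y] {ρ : X → X → ℝ} {A : ℝ}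
  {μ : Measure X}

theorem of_subsingleton [Subsingleton X] [IsProbabilityMeasure μ] (ρ : X → X → ℝ) (hA : 0 ≤ A) :
    HasGaussianConcentration ρ A μ := by
  intro f _ t
  obtain ⟨x₀⟩ : Nonempty X := μ.nonempty_of_neZero
  have hconst : f = fun _ => f x₀ := funext fun x => congrArg f (Subsingleton.elim x x₀)
  rw [hconst, mgf_const, integral_const, probReal_univ, one_smul]
  exact Real.exp_le_exp.2 (le_add_of_nonneg_right (by positivity))

theorem mono (h : HasGaussianConcentration ρ A μ) {B : ℝ} (hAB : A ≤ B) :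
    HasGaussianConcentration ρ B μ := fun f hf t => (h f hf t).trans (by gcongr)

theorem const_mul (h : HasGaussianConcentration ρ A μ) {c : ℝ} (hc : 0 < c) :
    HasGaussianConcentration (fun x y => c * ρ x y) (A * c ^ 2) μ := by
  intro f hf t
  have hf' : IsBoundedLipschitz ρ fun x => c⁻¹ * f x := by
    simpa [hc.ne'] using hf.const_mul (inv_nonneg.2 hc.le)
  calc mgf f μ t = mgf (fun x => c⁻¹ * f x) μ (c * t) := by
        rw [mgf_const_mul, inv_mul_cancel_left₀ hc.ne']
    _ ≤ Real.exp (c * t * (∫ x, c⁻¹ * f x ∂μ) + A * (c * t) ^ 2 / 2) := h _ hf' (c * t)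
    _ = Real.exp (t * (∫ x, f x ∂μ) + A * c ^ 2 * t ^ 2 / 2) := by
        rw [integral_const_mul]
        field_simp

theorem map (h : HasGaussianConcentration ρ A μ) {σ : Y → Y → ℝ} {g : X → Y} (hg : Measurable g)
    (hle : ∀ x x', σ (g x) (g x') ≤ ρ x x') : HasGaussianConcentration σ A (μ.map g) := by
  intro f hf t
  rw [mgf_map hg.aemeasurable (hf.measurable.const_mul t).exp.aestronglyMeasurable,
    integral_map hg.aemeasurable hf.measurable.aestronglyMeasurable]
  exact h _ (hf.comp hg hle) t

theorem compProd {r : X → X → ℝ} {d : Y → Y → ℝ} {B : ℝ} {κ : Kernel X Y} [IsMarkovKernel κ]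
    [IsFiniteMeasure μ] (hμ : HasGaussianConcentration (fun x x' => ρ x x' + r x x') A μ)
    (hκ : ∀ x, HasGaussianConcentration d B (κ x)) (hρ : ∀ x, ρ x x = 0) (hd : ∀ y, d y y = 0)
    (hr : ∀ x x', 0 ≤ r x x')
    (hW : ∀ x x', wassersteinDist 1 d (κ x) (κ x') ≤ ENNReal.ofReal (r x x')) :
    HasGaussianConcentration (fun p q : X × Y => ρ p.1 q.1 + d p.2 q.2) (A + B) (μ ⊗ₘ κ) := by
  intro f hf t
  set F : X → ℝ := fun x => ∫ y, f (x, y) ∂(κ x)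
  have hF : IsBoundedLipschitz (fun x x' => ρ x x' + r x x') F := hf.integral_kernel hρ hd hr hW
  have hexp := hf.integrable_exp_mul (μ ⊗ₘ κ) t
  calc mgf f (μ ⊗ₘ κ) t
      = ∫ x, mgf (fun y => f (x, y)) (κ x) t ∂μ := Measure.integral_compProd hexp
    _ ≤ ∫ x, Real.exp (t * F x) * Real.exp (B * t ^ 2 / 2) ∂μ := by
        refine integral_mono hexp.integral_compProd ((hF.integrable_exp_mul μ t).mul_const _)
          fun x => ?_
        simpa only [Real.exp_add] using hκ x _ (hf.section_right hρ x) t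
    _ = mgf F μ t * Real.exp (B * t ^ 2 / 2) := integral_mul_const _ _
    _ ≤ Real.exp (t * (∫ x, F x ∂μ) + A * t ^ 2 / 2) * Real.exp (B * t ^ 2 / 2) := by
        gcongr
        exact hμ F hF t
    _ = Real.exp (t * (∫ p, f p ∂(μ ⊗ₘ κ)) + (A + B) * t ^ 2 / 2) := by
        rw [← Real.exp_add, Measure.integral_compProd (hf.integrable _), add_assoc, ← add_div,
          ← add_mul]

theorem integral_sub_le_sqrt [IsProbabilityMeasure μ] (h : HasGaussianConcentration ρ A μ)
    {ν : Measure X} [IsProbabilityMeasure ν] (hH : relEntropy ν μ ≠ ∞) {f : X → ℝ}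
    (hf : IsBoundedLipschitz ρ f) :
    ∫ x, f x ∂ν - ∫ x, f x ∂μ ≤ √(2 * A * (relEntropy ν μ).toReal) := by
  set H := (relEntropy ν μ).toReal
  set D := ∫ x, f x ∂ν - ∫ x, f x ∂μ with hD
  have hquad (t : ℝ) : 0 ≤ A / 2 * (t * t) + -D * t + H := by
    have hexp := hf.integrable_exp_mul μ t
    have hdv := integral_le_toReal_relEntropy_add_log hH ((hf.integrable ν).const_mul t) hexp
    have hlog := (Real.log_le_iff_le_exp (mgf_pos hexp)).2 (h f hf t)
    rw [integral_const_mul] at hdv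
    rw [mgf] at hlog
    linear_combination hdv + hlog + t * hD
  refine Real.le_sqrt_of_sq_le ?_
  have := discrim_le_zero hquad
  rw [discrim] at this
  linarith

end HasGaussianConcentration

/-! ### Chains of conditional laws -/

/-- The `ℓ¹` product distance on `ι → E` in which the `i`-th coordinate has weight `L i`. -/
def weightedL1Dist {ι E : Type*} [Fintype ι] [PseudoMetricSpace E] (L : ι → ℝ) (x y : ι → E) : ℝ :=
  ∑ i, L i * dist (x i) (y i)

section WeightedL1Dist

variable {ι E : Type*} [Fintype ι] [PseudoMetricSpace E]

theorem weightedL1Dist_self (L : ι → ℝ) (x : ι → E) : weightedL1Dist L x x = 0 := by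
  simp [weightedL1Dist]

theorem weightedL1Dist_one :
    weightedL1Dist (E := E) (fun _ : ι => 1) = fun x y => ∑ i, dist (x i) (y i) := by
  funext x y
  simp only [weightedL1Dist, one_mul]

theorem weightedL1Dist_nonneg {L : ι → ℝ} (hL : ∀ i, 0 ≤ L i) (x y : ι → E) :
    0 ≤ weightedL1Dist L x y :=
  Finset.sum_nonneg fun i _ => mul_nonneg (hL i) dist_nonneg

theorem weightedL1Dist_add_mul (L b : ι → ℝ) (c : ℝ) (x y : ι → E) :
    weightedL1Dist (fun i => L i + c * b i) x y =
      weightedL1Dist L x y + c * weightedL1Dist b x y := by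
  simp only [weightedL1Dist, add_mul, mul_assoc, Finset.sum_add_distrib, Finset.mul_sum]

theorem weightedL1Dist_snoc {n : ℕ} (L : Fin (n + 1) → ℝ) (x x' : Fin n → E) (y y' : E) :
    weightedL1Dist L (Fin.snoc x y : Fin (n + 1) → E) (Fin.snoc x' y') =
      weightedL1Dist (fun i => L i.castSucc) x x' + L (Fin.last n) * dist y y' := by
  simp [weightedL1Dist, Fin.sum_univ_castSucc]

end WeightedL1Dist

section Chain

variable {E : Type*} [MeasurableSpace E]

theorem measurable_finSnoc (n : ℕ) :
    Measurable fun p : (Fin n → E) × E => (Fin.snoc p.1 p.2 : Fin (n + 1) → E) := by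
  refine measurable_pi_iff.2 fun i => ?_
  induction i using Fin.lastCases with
  | last => simpa using measurable_snd
  | cast i => simpa using measurable_fst.eval (a := i)

theorem bind_map_finSnoc_eq_compProd {n : ℕ} (μ : Measure (Fin n → E)) [SFinite μ]
    (κ : Kernel (Fin n → E) E) [IsSFiniteKernel κ] :
    (μ.bind fun x => (κ x).map (Fin.snoc x)) =
      (μ ⊗ₘ κ).map fun p => (Fin.snoc p.1 p.2 : Fin (n + 1) → E) := by
  have hmap (x : Fin n → E) {s : Set (Fin (n + 1) → E)} (hs : MeasurableSet s) :
      (κ x).map (Fin.snoc x) s = κ x (Prod.mk x ⁻¹' ((fun p => Fin.snoc p.1 p.2) ⁻¹' s)) :=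
    Measure.map_apply ((measurable_finSnoc n).comp measurable_prodMk_left) hs
  have hmeas : Measurable fun x => (κ x).map (Fin.snoc (α := fun _ => E) x) := by
    refine Measure.measurable_of_measurable_coe _ fun s hs => ?_
    simp_rw [fun x => hmap x hs]
    exact Kernel.measurable_kernel_prodMk_left (measurable_finSnoc n hs)
  ext s hs
  rw [Measure.map_apply (measurable_finSnoc n) hs, Measure.compProd_apply (measurable_finSnoc n hs),
    Measure.bind_apply hs hmeas.aemeasurable]
  exact lintegral_congr fun x => hmap x hs

theorem isProbabilityMeasure_chainMeasure {K : (i : ℕ) → (Fin i → E) → Measure E}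
    (hKm : ∀ i, Measurable (K i)) (hKp : ∀ i x, IsProbabilityMeasure (K i x)) (n : ℕ) :
    IsProbabilityMeasure (chainMeasure K n) := by
  induction n with
  | zero => exact Measure.dirac.isProbabilityMeasure
  | succ n ih =>
    let κ : Kernel (Fin n → E) E := ⟨K n, hKm n⟩
    have : IsMarkovKernel κ := ⟨hKp n⟩
    rw [chainMeasure, show K n = κ from rfl, bind_map_finSnoc_eq_compProd]
    exact Measure.isProbabilityMeasure_map (measurable_finSnoc n).aemeasurable

theorem sum_Ioi_castSucc {M : Type*} [AddCommMonoid M] {n : ℕ} (k : Fin n) (φ : Fin (n + 1) → M) :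
    ∑ i ∈ Finset.Ioi k.castSucc, φ i = ∑ i ∈ Finset.Ioi k, φ i.castSucc + φ (Fin.last n) := by
  have hIoi {m : ℕ} (k : Fin m) : Finset.Ioi k = Finset.univ.filter (k < ·) := by ext; simp
  rw [hIoi, hIoi, Finset.sum_filter, Finset.sum_filter, Fin.sum_univ_castSucc]
  simp [Fin.castSucc_lt_last]

variable [PseudoMetricSpace E] {C : ℝ}

theorem HasGaussianConcentration.finSnoc {n : ℕ} {μ : Measure (Fin n → E)} [IsFiniteMeasure μ]
    {κ : Kernel (Fin n → E) E} [IsMarkovKernel κ] (hκ : ∀ x, HasGaussianConcentration dist C (κ x))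
    {b : Fin n → ℝ} (hb : ∀ j, 0 ≤ b j)
    (hW : ∀ x x', wassersteinDist 1 dist (κ x) (κ x') ≤ ENNReal.ofReal (weightedL1Dist b x x'))
    {L : Fin (n + 1) → ℝ} {G : ℝ} (hG : 0 < G) (hLG : L (Fin.last n) ≤ G) {A : ℝ}
    (hμ : HasGaussianConcentration (weightedL1Dist fun j => L j.castSucc + G * b j) A μ) :
    HasGaussianConcentration (weightedL1Dist L) (A + C * G ^ 2)
      ((μ ⊗ₘ κ).map fun p => (Fin.snoc p.1 p.2 : Fin (n + 1) → E)) := by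
  have hμ' : HasGaussianConcentration
      (fun x x' => weightedL1Dist (fun j => L j.castSucc) x x' + G * weightedL1Dist b x x')
      A μ := by
    simpa only [← weightedL1Dist_add_mul] using hμ
  refine (hμ'.compProd (fun x => (hκ x).const_mul hG) (weightedL1Dist_self _) (by simp)
    (fun x x' => mul_nonneg hG.le (weightedL1Dist_nonneg hb x x')) fun x x' => ?_).map
    (measurable_finSnoc n) fun p q => ?_
  · rw [wassersteinDist_one_const_mul hG, ENNReal.ofReal_mul hG.le]
    gcongr
    exact hW x x'
  · rw [weightedL1Dist_snoc]
    gcongr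

theorem hasGaussianConcentration_chainMeasure {K : (i : ℕ) → (Fin i → E) → Measure E}
    (hKm : ∀ i, Measurable (K i)) (hKp : ∀ i x, IsProbabilityMeasure (K i x))
    (hK : ∀ i x, HasGaussianConcentration dist C (K i x)) {a : ℕ → ℝ} (ha : ∀ j, 0 ≤ a j)
    (hW : ∀ (i : ℕ) (x x' : Fin i → E), wassersteinDist 1 dist (K i x) (K i x') ≤
      ENNReal.ofReal (weightedL1Dist (fun k : Fin i => a (i - k)) x x'))
    {n : ℕ} {L g : Fin n → ℝ} (hg : ∀ k, 0 < g k)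
    (hLg : ∀ k, L k + ∑ i ∈ Finset.Ioi k, g i * a ((i : ℕ) - (k : ℕ)) ≤ g k) :
    HasGaussianConcentration (weightedL1Dist L) (C * ∑ k, g k ^ 2) (chainMeasure K n) := by
  induction n with
  | zero =>
    have := isProbabilityMeasure_chainMeasure hKm hKp 0
    exact .of_subsingleton _ (by simp)
  | succ n ih =>
    have := isProbabilityMeasure_chainMeasure hKm hKp n
    let κ : Kernel (Fin n → E) E := ⟨K n, hKm n⟩
    have : IsMarkovKernel κ := ⟨hKp n⟩
    have hlast : L (Fin.last n) ≤ g (Fin.last n) := by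
      simpa [← Fin.top_eq_last] using hLg (Fin.last n)
    have hinit (k : Fin n) : L k.castSucc + g (Fin.last n) * a (n - k) +
        ∑ i ∈ Finset.Ioi k, g i.castSucc * a ((i : ℕ) - (k : ℕ)) ≤ g k.castSucc := by
      have := hLg k.castSucc
      rw [sum_Ioi_castSucc] at this
      simp only [Fin.val_castSucc, Fin.val_last] at this
      linarith
    rw [chainMeasure, show K n = κ from rfl, bind_map_finSnoc_eq_compProd, Fin.sum_univ_castSucc,
      mul_add]
    exact (ih (fun k => hg k.castSucc) hinit).finSnoc (hK n) (fun k => ha _) (hW n) (hg _) hlast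

end Chain

/-! ### Kantorovich duality on finite sets -/

section FiniteDuality

variable {S T : Type*} [Fintype S] [Fintype T]

theorem exists_forall_apply_eq_sum_mul_add_mul (F : ((T → ℝ) × ℝ) →ₗ[ℝ] ℝ) :
    ∃ (β : T → ℝ) (l : ℝ), ∀ y r, F (y, r) = ∑ t, y t * β t + r * l := by
  classical
  refine ⟨fun t => F (Pi.single t 1, 0), F (0, 1), fun y r => ?_⟩
  have hy : F (y, 0) = ∑ t, y t * F (Pi.single t 1, 0) :=
    calc F (y, 0) = (F ∘ₗ LinearMap.inl ℝ (T → ℝ) ℝ) (∑ t, y t • Pi.single t 1) := by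
          rw [← pi_eq_sum_univ' y]; rfl
      _ = ∑ t, y t * F (Pi.single t 1, 0) := by simp only [map_sum, map_smul]; rfl
  have hr : F (0, r) = r * F (0, 1) := by simpa using F.map_smul r (0, 1)
  rw [← hy, ← hr, ← F.map_add, Prod.mk_add_mk, add_zero, zero_add]

/-- The second marginal and the cost of the coupling `p s * k s t`, as a linear function of the
kernel `k`. Finite transport duality separates its image from the set of admissible values. -/
def kernelMarginalCost (D : S → T → ℝ) (p : S → ℝ) : (S → T → ℝ) →ₗ[ℝ] (T → ℝ) × ℝ where
  toFun k := (fun t => ∑ s, p s * k s t, ∑ s, p s * ∑ t, k s t * D s t)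
  map_add' k k' := by
    simp only [Pi.add_apply, mul_add, add_mul, Finset.sum_add_distrib]
    rfl
  map_smul' m k := by
    simp only [Pi.smul_apply, smul_eq_mul, mul_left_comm _ m, mul_assoc m, ← Finset.mul_sum]
    rfl

theorem exists_mul_add_mul_lt_of_disjoint_kernelMarginalCost {D : S → T → ℝ} {p : S → ℝ}
    {q : T → ℝ} {c : ℝ}
    (h : Disjoint (kernelMarginalCost D p '' Set.univ.pi fun _ => stdSimplex ℝ T)
      ({q} ×ˢ Set.Iic c)) :
    ∃ (β : T → ℝ) (l : ℝ), ∀ k : S → T → ℝ, (∀ s, k s ∈ stdSimplex ℝ T) → ∀ r ≤ c,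
      ∑ s, p s * ∑ t, k s t * (β t + D s t * l) < ∑ t, q t * β t + r * l := by
  have hconv : Convex ℝ (Set.univ.pi fun _ : S => stdSimplex ℝ T) :=
    convex_pi fun _ _ => convex_stdSimplex ℝ T
  have hcomp : IsCompact (Set.univ.pi fun _ : S => stdSimplex ℝ T) :=
    isCompact_univ_pi fun _ => isCompact_stdSimplex ℝ T
  obtain ⟨F, u, v, hFu, huv, hFv⟩ := geometric_hahn_banach_compact_closed
    (hconv.linear_image (kernelMarginalCost D p))
    (hcomp.image (kernelMarginalCost D p).continuous_of_finiteDimensional)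
    ((convex_singleton q).prod (convex_Iic c)) (isClosed_singleton.prod isClosed_Iic) h
  obtain ⟨β, l, hF⟩ := exists_forall_apply_eq_sum_mul_add_mul F.toLinearMap
  refine ⟨β, l, fun k hk r hr => ?_⟩
  calc ∑ s, p s * ∑ t, k s t * (β t + D s t * l)
      = ∑ t, (∑ s, p s * k s t) * β t + (∑ s, p s * ∑ t, k s t * D s t) * l := by
        simp only [mul_add, Finset.sum_add_distrib, Finset.mul_sum, Finset.sum_mul, mul_assoc]
        rw [Finset.sum_comm]
    _ = F (kernelMarginalCost D p k) := (hF _ _).symm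
    _ < F (q, r) := (hFu _ ⟨k, fun s _ => hk s, rfl⟩).trans (huv.trans (hFv _ ⟨rfl, hr⟩))
    _ = ∑ t, q t * β t + r * l := hF _ _

theorem exists_kernel_of_forall_sum_mul_iInf_sub_le {D : S → T → ℝ} {p : S → ℝ} {q : T → ℝ}
    (hp : ∑ s, p s = 1) (hq : q ∈ stdSimplex ℝ T) {c : ℝ}
    (h : ∀ b : T → ℝ, (∑ s, p s * ⨅ t, (D s t + b t)) - ∑ t, q t * b t ≤ c) :
    ∃ k : S → T → ℝ, (∀ s, k s ∈ stdSimplex ℝ T) ∧ (∀ t, ∑ s, p s * k s t = q t) ∧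
      ∑ s, p s * ∑ t, k s t * D s t ≤ c := by
  classical
  suffices ¬ Disjoint (kernelMarginalCost D p '' Set.univ.pi fun _ => stdSimplex ℝ T)
      ({q} ×ˢ Set.Iic c) by
    obtain ⟨_, ⟨k, hk, rfl⟩, hkq, hkc⟩ := Set.not_disjoint_iff.1 this
    exact ⟨k, fun s => hk s trivial, congrFun hkq, hkc⟩
  intro hdisj
  obtain ⟨β, l, hsep⟩ := exists_mul_add_mul_lt_of_disjoint_kernelMarginalCost hdisj
  have hl : l < 0 := by
    -- The product coupling has the right marginals, so only its cost can separate it.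
    set c₀ := ∑ s, p s * ∑ t, q t * D s t
    have hprod (r : ℝ) (hr : r ≤ c) : c₀ * l < r * l := by
      have := hsep (fun _ => q) (fun _ => hq) r hr
      have hsum : ∑ s, p s * ∑ t, q t * (β t + D s t * l) = ∑ t, q t * β t + c₀ * l := by
        simp only [c₀, mul_add, Finset.sum_add_distrib, ← Finset.sum_mul, ← mul_assoc, hp, one_mul]
      linarith
    have := hprod (min c c₀ - 1) (by linarith [min_le_left c c₀])
    nlinarith [min_le_right c c₀]
  have : Nonempty T := by
    by_contra! hT
    simpa using hq.2
  choose σ hσ using fun s => exists_eq_ciInf_of_finite (f := fun t => D s t + β t / l)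
  have hdet := hsep (fun s => Pi.single (σ s) 1) (fun s => single_mem_stdSimplex ℝ _) c le_rfl
  have hmul (s : S) : β (σ s) + D s (σ s) * l = (⨅ t, (D s t + β t / l)) * l := by
    rw [← hσ, add_mul, div_mul_cancel₀ _ hl.ne, add_comm]
  have hb := mul_le_mul_of_nonpos_right (h fun t => β t / l) hl.le
  simp only [sub_mul, Finset.sum_mul, mul_assoc, div_mul_cancel₀ _ hl.ne] at hb
  simp only [Pi.single_apply, ite_mul, one_mul, zero_mul, Finset.sum_ite_eq', Finset.mem_univ,
    if_true, hmul] at hdet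
  linarith

end FiniteDuality

section FiniteTransport

variable {S T : Type*} [Finite S] [MeasurableSpace S] [MeasurableSingletonClass S]
  [MeasurableSpace T] [MeasurableSingletonClass T]

theorem exists_kernel_measureReal_singleton [Fintype T] {k : S → T → ℝ}
    (hk : ∀ s, k s ∈ stdSimplex ℝ T) :
    ∃ κ : Kernel S T, IsMarkovKernel κ ∧ ∀ s t, (κ s).real {t} = k s t := by
  classical
  have hmass (s : S) (t : T) : (∑ t, ENNReal.ofReal (k s t) • Measure.dirac t) {t} =
      ENNReal.ofReal (k s t) := by
    simp [Set.indicator_apply]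
  refine ⟨⟨fun s => ∑ t, ENNReal.ofReal (k s t) • Measure.dirac t, .of_discrete⟩, ⟨fun s => ⟨?_⟩⟩,
    fun s t => ?_⟩
  · simp [← ENNReal.ofReal_sum_of_nonneg fun t _ => (hk s).1 t, (hk s).2]
  · exact (congrArg ENNReal.toReal (hmass s t)).trans (ENNReal.toReal_ofReal ((hk s).1 t))

theorem exists_isCoupling_integral_le_of_forall_integral_iInf_sub_le [Finite T] {μ : Measure S}
    {ν : Measure T} [IsProbabilityMeasure μ] [IsProbabilityMeasure ν] {D : S → T → ℝ} {c : ℝ}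
    (h : ∀ b : T → ℝ, ∫ s, ⨅ t, (D s t + b t) ∂μ - ∫ t, b t ∂ν ≤ c) :
    ∃ γ, IsCoupling γ μ ν ∧ ∫ z, D z.1 z.2 ∂γ ≤ c := by
  have := Fintype.ofFinite S
  have := Fintype.ofFinite T
  simp only [integral_fintype Integrable.of_finite, smul_eq_mul] at h
  obtain ⟨k, hk, hkν, hkc⟩ := exists_kernel_of_forall_sum_mul_iInf_sub_le
    (p := fun s => μ.real {s}) (q := fun t => ν.real {t}) (by simp)
    ⟨fun _ => measureReal_nonneg, by simp⟩ h
  obtain ⟨κ, hκ, hκk⟩ := exists_kernel_measureReal_singleton hk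
  refine ⟨μ ⊗ₘ κ, ⟨Measure.fst_compProd μ κ, ?_⟩, ?_⟩
  · change (μ ⊗ₘ κ).snd = ν
    rw [Measure.snd_compProd]
    refine Measure.ext_of_measureReal_singleton fun t => ?_
    rw [← hkν t, measureReal_def, Measure.bind_apply (measurableSet_singleton t) κ.aemeasurable,
      lintegral_fintype, ENNReal.toReal_sum fun s _ => by finiteness]
    simp only [ENNReal.toReal_mul, ← measureReal_def, hκk, mul_comm]
  · rw [Measure.integral_compProd .of_finite]
    simpa only [integral_fintype Integrable.of_finite, smul_eq_mul, hκk] using hkc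

end FiniteTransport

/-! ### Kantorovich–Rubinstein duality by quantization -/

section Lift

variable {X Y S T : Type*} [MeasurableSpace X] [MeasurableSpace Y]

theorem measure_map_bind {m : Measure X} {κ : X → Measure Y} (hκ : Measurable κ) [MeasurableSpace S]
    {f : Y → S} (hf : Measurable f) : (m.bind κ).map f = m.bind fun x => (κ x).map f := by
  have hκf : Measurable fun x => (κ x).map f := (Measure.measurable_map f hf).comp hκ
  ext s hs
  simp only [Measure.map_apply hf hs, Measure.bind_apply (hf hs) hκ.aemeasurable,
    Measure.bind_apply hs hκf.aemeasurable]

theorem bind_comp_eq_bind_map {m : Measure X} {f : X → Y} (hf : Measurable f)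
    [MeasurableSpace S] {κ : Y → Measure S} (hκ : Measurable κ) :
    (m.bind fun x => κ (f x)) = (m.map f).bind κ := by
  rw [Measure.bind, Measure.bind, Measure.map_map hκ hf]
  rfl

variable [MeasurableSpace S] [MeasurableSingletonClass S]

theorem cond_fiber_map_eq_dirac {f : X → S} (hf : Measurable f) {μ : Measure X} {s : S}
    (h : IsProbabilityMeasure μ[|f ⁻¹' {s}]) : (μ[|f ⁻¹' {s}]).map f = Measure.dirac s := by
  have hfs : f =ᵐ[μ[|f ⁻¹' {s}]] fun _ => s := ae_cond_mem (hf (measurableSet_singleton s))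
  rw [Measure.map_congr hfs, Measure.map_const, measure_univ, one_smul]

variable [Finite S] [Finite T] [MeasurableSpace T] [MeasurableSingletonClass T]

theorem bind_map_cond_fiber {f : X → S} (hf : Measurable f) (μ : Measure X) [IsFiniteMeasure μ] :
    ((μ.map f).bind fun s => μ[|f ⁻¹' {s}]) = μ := by
  have := Fintype.ofFinite S
  conv_rhs => rw [← sum_meas_smul_cond_fiber hf μ]
  ext A hA
  rw [Measure.bind_apply hA Measurable.of_discrete.aemeasurable, lintegral_fintype]
  simp [Measure.map_apply hf (measurableSet_singleton _), mul_comm]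

theorem ae_map_isProbabilityMeasure_cond_fiber {f : X → S} (hf : Measurable f) (μ : Measure X)
    [IsFiniteMeasure μ] :
    ∀ᵐ s ∂μ.map f, IsProbabilityMeasure μ[|f ⁻¹' {s}] := by
  rw [ae_iff_of_countable]
  intro s hs
  rw [Measure.map_apply hf (measurableSet_singleton s)] at hs
  exact cond_isProbabilityMeasure hs

theorem IsCoupling.exists_map_prodMap_eq {μ : Measure X} {ν : Measure Y} [IsFiniteMeasure μ]
    [IsFiniteMeasure ν] {f : X → S} {g : Y → T} (hf : Measurable f) (hg : Measurable g)
    {γ : Measure (S × T)} (hγ : IsCoupling γ (μ.map f) (ν.map g)) :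
    ∃ π, IsCoupling π μ ν ∧ π.map (Prod.map f g) = γ := by
  have hμ : ∀ᵐ z ∂γ, IsProbabilityMeasure μ[|f ⁻¹' {z.1}] := by
    have := ae_map_isProbabilityMeasure_cond_fiber hf μ
    rw [← hγ.1] at this
    exact ae_of_ae_map measurable_fst.aemeasurable this
  have hν : ∀ᵐ z ∂γ, IsProbabilityMeasure ν[|g ⁻¹' {z.2}] := by
    have := ae_map_isProbabilityMeasure_cond_fiber hg ν
    rw [← hγ.2] at this
    exact ae_of_ae_map measurable_snd.aemeasurable this
  have hfst : (γ.bind fun z => μ[|f ⁻¹' {z.1}]) = μ := by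
    rw [bind_comp_eq_bind_map (κ := fun s => μ[|f ⁻¹' {s}]) measurable_fst .of_discrete, hγ.1,
      bind_map_cond_fiber hf]
  have hsnd : (γ.bind fun z => ν[|g ⁻¹' {z.2}]) = ν := by
    rw [bind_comp_eq_bind_map (κ := fun t => ν[|g ⁻¹' {t}]) measurable_snd .of_discrete, hγ.2,
      bind_map_cond_fiber hg]
  have hκ : Measurable fun z : S × T => (μ[|f ⁻¹' {z.1}]).prod (ν[|g ⁻¹' {z.2}]) := .of_discrete
  refine ⟨γ.bind fun z => (μ[|f ⁻¹' {z.1}]).prod (ν[|g ⁻¹' {z.2}]), ⟨?_, ?_⟩, ?_⟩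
  · rw [measure_map_bind hκ measurable_fst]
    refine (Measure.bind_congr_right ?_).trans hfst
    filter_upwards [hν] with z hz
    simp
  · rw [measure_map_bind hκ measurable_snd]
    refine (Measure.bind_congr_right ?_).trans hsnd
    filter_upwards [hμ] with z hz
    simp
  · rw [measure_map_bind hκ (hf.prodMap hg)]
    conv_rhs => rw [← Measure.bind_dirac (m := γ)]
    refine Measure.bind_congr_right ?_
    filter_upwards [hμ, hν] with z hz hz'
    rw [← Measure.map_prod_map _ _ hf hg, cond_fiber_map_eq_dirac hf hz,
      cond_fiber_map_eq_dirac hg hz', Measure.dirac_prod_dirac]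

end Lift

/-- `d` is a jointly measurable pseudo-metric. It is not a `PseudoMetricSpace` instance because the
product distances of interest live on `ι → E`, which already carries the sup distance. -/
structure IsMeasurablePseudoMetric {X : Type*} [MeasurableSpace X] (d : X → X → ℝ) : Prop where
  measurable : Measurable fun z : X × X => d z.1 z.2
  self : ∀ x, d x x = 0
  comm : ∀ x y, d x y = d y x
  triangle : ∀ x y z, d x z ≤ d x y + d y z

namespace IsMeasurablePseudoMetric

variable {X S : Type*} [MeasurableSpace X] {d : X → X → ℝ}

theorem nonneg (hd : IsMeasurablePseudoMetric d) (x y : X) : 0 ≤ d x y := by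
  linarith [hd.triangle x y x, hd.self x, hd.comm x y]

theorem measurable_left (hd : IsMeasurablePseudoMetric d) (y : X) : Measurable fun x => d x y :=
  hd.measurable.comp measurable_prodMk_right

theorem isBoundedLipschitz_min (hd : IsMeasurablePseudoMetric d) {f : X → ℝ} (hf : Measurable f)
    {m : ℝ} (hm : ∀ x, m ≤ f x) (hsub : ∀ x y, f x - f y ≤ d x y) (N : ℝ) :
    IsBoundedLipschitz d fun x => min (f x) N where
  measurable := hf.min measurable_const
  bounded := ⟨max (-min m N) N, fun x => abs_le'.2
    ⟨(min_le_right _ _).trans (le_max_right _ _),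
      (neg_le_neg (min_le_min_right N (hm x))).trans (le_max_left _ _)⟩⟩
  sub_le x y := by
    have := hsub x y
    have := hd.nonneg x y
    rcases min_cases (f x) N with h | h <;> rcases min_cases (f y) N with h' | h' <;> linarith

theorem isBoundedLipschitz_min_dist (hd : IsMeasurablePseudoMetric d) (x₀ : X) (N : ℝ) :
    IsBoundedLipschitz d fun x => min (d x x₀) N :=
  hd.isBoundedLipschitz_min (hd.measurable_left x₀) (fun x => hd.nonneg x x₀)
    (fun x y => by linarith [hd.triangle x y x₀]) N

theorem exists_isBoundedLipschitz_eq_iInf (hd : IsMeasurablePseudoMetric d) [Finite S] [Nonempty S]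
    (r : S → X) (b : S → ℝ) :
    ∃ f, IsBoundedLipschitz d f ∧ ∀ s, f (r s) = ⨅ t, (d (r s) (r t) + b t) := by
  have hbdd (x : X) : BddBelow (Set.range fun t => d x (r t) + b t) := (Set.finite_range _).bddBelow
  refine ⟨fun x => min (⨅ t, (d x (r t) + b t)) (⨆ t, b t), hd.isBoundedLipschitz_min
    (m := ⨅ t, b t) (.iInf fun t => (hd.measurable_left (r t)).add_const _) (fun x => ?_)
    (fun x y => ?_) _, fun s => min_eq_left ?_⟩
  · exact ciInf_mono (Set.finite_range _).bddBelow fun t => by linarith [hd.nonneg x (r t)]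
  · rw [sub_le_comm]
    refine le_ciInf fun t => ?_
    linarith [ciInf_le (hbdd x) t, hd.triangle x y (r t)]
  · calc ⨅ t, (d (r s) (r t) + b t) ≤ d (r s) (r s) + b s := ciInf_le (hbdd _) s
      _ = b s := by rw [hd.self, zero_add]
      _ ≤ ⨆ t, b t := le_ciSup (Set.finite_range b).bddAbove s

end IsMeasurablePseudoMetric

theorem IsBoundedLipschitz.integral_comp_le_add {Ω X : Type*} [MeasurableSpace Ω]
    [MeasurableSpace X] {d : X → X → ℝ} {f : X → ℝ} (hf : IsBoundedLipschitz d f) {μ : Measure Ω}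
    [IsFiniteMeasure μ] {g h : Ω → X} (hg : Measurable g) (hh : Measurable h)
    (hd : Integrable (fun ω => d (g ω) (h ω)) μ) :
    ∫ ω, f (g ω) ∂μ ≤ ∫ ω, f (h ω) ∂μ + ∫ ω, d (g ω) (h ω) ∂μ := by
  have hint {g : Ω → X} (hg : Measurable g) : Integrable (fun ω => f (g ω)) μ :=
    (hf.integrable (μ.map g)).comp_measurable hg
  rw [← integral_add (hint hh) hd]
  refine integral_mono (hint hg) ((hint hh).add hd) fun ω => ?_
  linarith [hf.sub_le (g ω) (h ω)]

section Quantization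

variable {X S : Type*} [MeasurableSpace X] [Finite S] [MeasurableSpace S]
  [MeasurableSingletonClass S] {d : X → X → ℝ} {μ ν : Measure X} {q : X → S} {r : S → X} {c : ℝ}

namespace IsMeasurablePseudoMetric

theorem integral_iInf_sub_le_of_map [IsProbabilityMeasure μ] [IsProbabilityMeasure ν]
    (hd : IsMeasurablePseudoMetric d) (hq : Measurable q)
    (hμ : Integrable (fun x => d x (r (q x))) μ) (hν : Integrable (fun x => d x (r (q x))) ν)
    (h : ∀ f, IsBoundedLipschitz d f → ∫ x, f x ∂μ - ∫ x, f x ∂ν ≤ c) (b : S → ℝ) :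
    ∫ s, ⨅ t, (d (r s) (r t) + b t) ∂μ.map q - ∫ t, b t ∂ν.map q ≤
      c + (∫ x, d x (r (q x)) ∂μ + ∫ x, d x (r (q x)) ∂ν) := by
  have : Nonempty S := μ.nonempty_of_neZero.map q
  have hrq : Measurable fun x => r (q x) := (Measurable.of_discrete (f := r)).comp hq
  obtain ⟨f, hf, hfr⟩ := hd.exists_isBoundedLipschitz_eq_iInf r b
  simp_rw [← hfr]
  have hb : ∫ s, f (r s) ∂ν.map q ≤ ∫ t, b t ∂ν.map q := by
    refine integral_mono .of_finite .of_finite fun s => ?_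
    calc f (r s) ≤ d (r s) (r s) + b s :=
          (hfr s).trans_le (ciInf_le (Set.finite_range _).bddBelow s)
      _ = b s := by rw [hd.self, zero_add]
  rw [integral_map hq.aemeasurable .of_discrete] at hb
  rw [integral_map hq.aemeasurable .of_discrete]
  have hμ' : Integrable (fun x => d (r (q x)) x) μ := by simpa only [hd.comm (r _)] using hμ
  have hμf := hf.integral_comp_le_add hrq measurable_id hμ'
  have hνf := hf.integral_comp_le_add measurable_id hrq hν
  simp only [id_eq, hd.comm (r _)] at hμf hνf
  linarith [h f hf]

theorem wassersteinDist_one_le_of_isCoupling_map [IsFiniteMeasure μ] [IsFiniteMeasure ν]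
    (hd : IsMeasurablePseudoMetric d) (hq : Measurable q) {γ : Measure (S × S)}
    (hγ : IsCoupling γ (μ.map q) (ν.map q)) :
    wassersteinDist 1 d μ ν ≤ ∫⁻ z, ENNReal.ofReal (d (r z.1) (r z.2)) ∂γ +
      (∫⁻ x, ENNReal.ofReal (d x (r (q x))) ∂μ + ∫⁻ x, ENNReal.ofReal (d x (r (q x))) ∂ν) := by
  obtain ⟨π, hπ, hπγ⟩ := hγ.exists_map_prodMap_eq hq hq
  have hfst : MeasurePreserving Prod.fst π μ := ⟨measurable_fst, hπ.1⟩
  have hsnd : MeasurePreserving Prod.snd π ν := ⟨measurable_snd, hπ.2⟩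
  have hmap : MeasurePreserving (Prod.map q q) π γ := ⟨hq.prodMap hq, hπγ⟩
  have hD : Measurable fun z : S × S => ENNReal.ofReal (d (r z.1) (r z.2)) := .of_discrete
  have hΔ : Measurable fun x => ENNReal.ofReal (d x (r (q x))) :=
    (hd.measurable.comp
      (measurable_id.prodMk ((Measurable.of_discrete (f := r)).comp hq))).ennreal_ofReal
  have hD' : Measurable fun z => ENNReal.ofReal (d (r (Prod.map q q z).1) (r (Prod.map q q z).2)) :=
    hD.comp (hq.prodMap hq)
  have hΔ' : Measurable fun z : X × X => ENNReal.ofReal (d z.1 (r (q z.1))) :=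
    hΔ.comp measurable_fst
  rw [← hmap.lintegral_comp hD, ← hfst.lintegral_comp hΔ, ← hsnd.lintegral_comp hΔ,
    ← lintegral_add_left hΔ', ← lintegral_add_left hD', wassersteinDist_one]
  refine (iInf₂_le π hπ).trans (lintegral_mono fun z => ?_)
  simp only [Prod.map_fst, Prod.map_snd]
  rw [← ENNReal.ofReal_add (hd.nonneg _ _) (hd.nonneg _ _),
    ← ENNReal.ofReal_add (hd.nonneg _ _) (add_nonneg (hd.nonneg _ _) (hd.nonneg _ _))]
  refine ENNReal.ofReal_le_ofReal ?_
  linarith [hd.triangle z.1 (r (q z.1)) z.2, hd.triangle (r (q z.1)) (r (q z.2)) z.2,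
    hd.comm z.2 (r (q z.2))]

/- Quantizing costs the displacement of each measure twice: once in moving it to the finite set `r`,
once in comparing the finite dual problem with the original one. -/
theorem wassersteinDist_one_le_of_finite_quantization [IsProbabilityMeasure μ]
    [IsProbabilityMeasure ν] (hd : IsMeasurablePseudoMetric d) (hq : Measurable q)
    (hμ : Integrable (fun x => d x (r (q x))) μ) (hν : Integrable (fun x => d x (r (q x))) ν)
    (h : ∀ f, IsBoundedLipschitz d f → ∫ x, f x ∂μ - ∫ x, f x ∂ν ≤ c) :
    wassersteinDist 1 d μ ν ≤
      ENNReal.ofReal (c + 2 * (∫ x, d x (r (q x)) ∂μ + ∫ x, d x (r (q x)) ∂ν)) := by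
  have := Measure.isProbabilityMeasure_map hq.aemeasurable (μ := μ)
  have := Measure.isProbabilityMeasure_map hq.aemeasurable (μ := ν)
  obtain ⟨γ, hγ, hγc⟩ := exists_isCoupling_integral_le_of_forall_integral_iInf_sub_le
    (hd.integral_iInf_sub_le_of_map hq hμ hν h)
  have : IsFiniteMeasure (γ.map Prod.fst) := hγ.1 ▸ inferInstance
  have : IsFiniteMeasure γ := Measure.isFiniteMeasure_of_map measurable_fst.aemeasurable
  refine (hd.wassersteinDist_one_le_of_isCoupling_map (r := r) hq hγ).trans ?_
  rw [← ofReal_integral_eq_lintegral_ofReal hμ (.of_forall fun x => hd.nonneg _ _),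
    ← ofReal_integral_eq_lintegral_ofReal hν (.of_forall fun x => hd.nonneg _ _),
    ← ofReal_integral_eq_lintegral_ofReal .of_finite (.of_forall fun z => hd.nonneg _ _),
    ← ENNReal.ofReal_add (integral_nonneg fun x => hd.nonneg _ _)
      (integral_nonneg fun x => hd.nonneg _ _),
    ← ENNReal.ofReal_add (integral_nonneg fun z => hd.nonneg _ _)
      (add_nonneg (integral_nonneg fun x => hd.nonneg _ _)
        (integral_nonneg fun x => hd.nonneg _ _))]
  exact ENNReal.ofReal_le_ofReal (by linarith)

end IsMeasurablePseudoMetric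

end Quantization

theorem exists_measurable_selection {X ι : Type*} [MeasurableSpace X] [MeasurableSpace ι]
    [Countable ι] [Nonempty ι] {p : X → ι → Prop} (hp : ∀ i, MeasurableSet {x | p x i})
    (h : ∀ x, ∃ i, p x i) : ∃ q : X → ι, Measurable q ∧ ∀ x, p x (q x) := by
  classical
  obtain ⟨g, hg⟩ := exists_surjective_nat ι
  have hfind (x : X) : ∃ k, p x (g k) := by
    obtain ⟨i, hi⟩ := h x
    obtain ⟨k, rfl⟩ := hg i
    exact ⟨k, hi⟩
  exact ⟨fun x => g (Nat.find (hfind x)),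
    Measurable.of_discrete.comp (measurable_find hfind fun k => hp (g k)),
    fun x => Nat.find_spec (hfind x)⟩

theorem exists_measurable_argmin {X ι : Type*} [MeasurableSpace X] [MeasurableSpace ι] [Finite ι]
    [Nonempty ι] {φ : ι → X → ℝ} (hφ : ∀ i, Measurable (φ i)) :
    ∃ q : X → ι, Measurable q ∧ ∀ x i, φ (q x) x ≤ φ i x :=
  exists_measurable_selection (p := fun x j => ∀ i, φ j x ≤ φ i x)
    (fun j => by
      simp only [Set.ofPred_forall]
      exact .iInter fun i => measurableSet_le (hφ j) (hφ i))
    fun x => Finite.exists_min fun i => φ i x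

section KantorovichRubinstein

open Filter Topology

variable {X : Type*} [MeasurableSpace X] {d : X → X → ℝ} {e : ℕ → X} {q : ∀ N, X → Fin (N + 1)}

namespace IsMeasurablePseudoMetric

theorem tendsto_dist_nearest (hd : IsMeasurablePseudoMetric d)
    (he : ∀ x, ∀ ε > 0, ∃ k, d x (e k) < ε)
    (hq : ∀ N x (j : Fin (N + 1)), d x (e (q N x)) ≤ d x (e j)) (x : X) :
    Tendsto (fun N => d x (e (q N x))) atTop (𝓝 0) := by
  refine tendsto_order.2 ⟨fun ε hε => .of_forall fun N => hε.trans_le (hd.nonneg _ _),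
    fun ε hε => ?_⟩
  obtain ⟨k, hk⟩ := he x ε hε
  filter_upwards [eventually_ge_atTop k] with N hN
  exact (hq N x ⟨k, Nat.lt_succ_of_le hN⟩).trans_lt hk

theorem integrable_dist_nearest (hd : IsMeasurablePseudoMetric d) {μ : Measure X}
    (hqm : ∀ N, Measurable (q N)) (hq : ∀ N x (j : Fin (N + 1)), d x (e (q N x)) ≤ d x (e j))
    (hμ : Integrable (fun x => d x (e 0)) μ) (N : ℕ) :
    Integrable (fun x => d x (e (q N x))) μ := by
  have heq : Measurable fun x => e (q N x) :=
    (Measurable.of_discrete (f := fun j : Fin (N + 1) => e j)).comp (hqm N)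
  refine hμ.mono' (hd.measurable.comp (measurable_id.prodMk heq)).aestronglyMeasurable
    (.of_forall fun x => ?_)
  rw [Real.norm_of_nonneg (hd.nonneg _ _)]
  exact hq N x 0

theorem tendsto_integral_dist_nearest (hd : IsMeasurablePseudoMetric d) {μ : Measure X}
    (he : ∀ x, ∀ ε > 0, ∃ k, d x (e k) < ε) (hqm : ∀ N, Measurable (q N))
    (hq : ∀ N x (j : Fin (N + 1)), d x (e (q N x)) ≤ d x (e j))
    (hμ : Integrable (fun x => d x (e 0)) μ) :
    Tendsto (fun N => ∫ x, d x (e (q N x)) ∂μ) atTop (𝓝 0) := by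
  rw [← integral_zero X ℝ]
  refine tendsto_integral_of_dominated_convergence _
    (fun N => (hd.integrable_dist_nearest hqm hq hμ N).aestronglyMeasurable) hμ
    (fun N => .of_forall fun x => ?_) (.of_forall (hd.tendsto_dist_nearest he hq))
  rw [Real.norm_of_nonneg (hd.nonneg _ _)]
  exact hq N x 0

theorem wassersteinDist_one_le_of_forall_integral_sub_le (hd : IsMeasurablePseudoMetric d)
    {μ ν : Measure X} [IsProbabilityMeasure μ] [IsProbabilityMeasure ν] {c : ℝ}
    (he : ∀ x, ∀ ε > 0, ∃ k, d x (e k) < ε)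
    (hμ : Integrable (fun x => d x (e 0)) μ) (hν : Integrable (fun x => d x (e 0)) ν)
    (h : ∀ f, IsBoundedLipschitz d f → ∫ x, f x ∂μ - ∫ x, f x ∂ν ≤ c) :
    wassersteinDist 1 d μ ν ≤ ENNReal.ofReal c := by
  choose q hqm hq using fun N => exists_measurable_argmin (ι := Fin (N + 1))
    (φ := fun j x => d x (e j)) fun j => hd.measurable_left (e j)
  have hlim : Tendsto
      (fun N => c + 2 * (∫ x, d x (e (q N x)) ∂μ + ∫ x, d x (e (q N x)) ∂ν)) atTop (𝓝 c) := by
    simpa using (((hd.tendsto_integral_dist_nearest he hqm hq hμ).add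
      (hd.tendsto_integral_dist_nearest he hqm hq hν)).const_mul 2).const_add c
  refine ge_of_tendsto (ENNReal.tendsto_ofReal hlim) (.of_forall fun N => ?_)
  exact hd.wassersteinDist_one_le_of_finite_quantization (r := fun j : Fin (N + 1) => e j) (hqm N)
    (hd.integrable_dist_nearest hqm hq hμ N) (hd.integrable_dist_nearest hqm hq hν N) h

end IsMeasurablePseudoMetric

end KantorovichRubinstein

/-! ### From concentration to transport -/

theorem integrable_of_forall_integral_min_le {X : Type*} [MeasurableSpace X] {μ : Measure X}
    [IsFiniteMeasure μ] {f : X → ℝ} (hf : Measurable f) (hf0 : ∀ x, 0 ≤ f x) {M : ℝ}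
    (h : ∀ N : ℕ, ∫ x, min (f x) N ∂μ ≤ M) : Integrable f μ := by
  have hmin0 (N : ℕ) (x : X) : 0 ≤ min (f x) N := le_min (hf0 x) N.cast_nonneg
  have hmeas (N : ℕ) : Measurable fun x => min (f x) N := hf.min measurable_const
  have hle (N : ℕ) : ∫⁻ x, ENNReal.ofReal (min (f x) N) ∂μ ≤ ENNReal.ofReal M := by
    rw [← ofReal_integral_eq_lintegral_ofReal _ (.of_forall (hmin0 N))]
    · exact ENNReal.ofReal_le_ofReal (h N)
    · refine .of_bound (hmeas N).aestronglyMeasurable N (.of_forall fun x => ?_)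
      exact (Real.norm_of_nonneg (hmin0 N x)).trans_le (min_le_right _ _)
  have hsup (x : X) : ⨆ N : ℕ, ENNReal.ofReal (min (f x) N) = ENNReal.ofReal (f x) := by
    simp_rw [ENNReal.ofReal_min, ENNReal.ofReal_natCast, ← inf_iSup_eq, ENNReal.iSup_natCast,
      inf_top_eq]
  have hmono : Monotone fun (N : ℕ) x => ENNReal.ofReal (min (f x) N) := fun m n hmn x =>
    ENNReal.ofReal_le_ofReal (min_le_min_left _ (Nat.cast_le.2 hmn))
  rw [← lintegral_ofReal_ne_top_iff_integrable hf.aestronglyMeasurable (.of_forall hf0)]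
  refine ne_top_of_le_ne_top (ENNReal.ofReal_ne_top (r := M)) ?_
  calc ∫⁻ x, ENNReal.ofReal (f x) ∂μ = ⨆ N : ℕ, ∫⁻ x, ENNReal.ofReal (min (f x) N) ∂μ := by
        rw [← lintegral_iSup (fun N => (hmeas N).ennreal_ofReal) hmono]
        simp_rw [hsup]
    _ ≤ ENNReal.ofReal M := iSup_le hle

namespace HasGaussianConcentration

variable {X : Type*} [MeasurableSpace X] {d : X → X → ℝ} {A : ℝ} {μ ν : Measure X}
  [IsProbabilityMeasure μ]

theorem integrable_dist (h : HasGaussianConcentration d A μ) (hd : IsMeasurablePseudoMetric d)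
    (x₀ : X) : Integrable (fun x => d x x₀) μ := by
  have hexp : Integrable (fun x => Real.exp (-d x x₀)) μ :=
    .of_bound (hd.measurable_left x₀).neg.exp.aestronglyMeasurable 1 (.of_forall fun x => by
      simpa using hd.nonneg x x₀)
  refine integrable_of_forall_integral_min_le (hd.measurable_left x₀) (fun x => hd.nonneg x x₀)
    (M := A / 2 - Real.log (∫ x, Real.exp (-d x x₀) ∂μ)) fun N => ?_
  -- At `t = -1`, concentration bounds the truncated means uniformly in the truncation level.
  have hf := hd.isBoundedLipschitz_min_dist x₀ N
  have hmono : ∫ x, Real.exp (-d x x₀) ∂μ ≤ mgf (fun x => min (d x x₀) N) μ (-1) :=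
    integral_mono hexp (hf.integrable_exp_mul μ (-1)) fun x =>
      Real.exp_le_exp.2 (by linarith [min_le_left (d x x₀) N])
  have hlog := (Real.log_le_iff_le_exp (integral_exp_pos hexp)).2 (hmono.trans (h _ hf (-1)))
  linarith

theorem integrable_dist_of_relEntropy_ne_top (h : HasGaussianConcentration d A μ)
    (hd : IsMeasurablePseudoMetric d) [IsProbabilityMeasure ν] (hH : relEntropy ν μ ≠ ∞) (x₀ : X) :
    Integrable (fun x => d x x₀) ν := by
  refine integrable_of_forall_integral_min_le (hd.measurable_left x₀) (fun x => hd.nonneg x x₀)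
    (M := ∫ x, d x x₀ ∂μ + √(2 * A * (relEntropy ν μ).toReal)) fun N => ?_
  have hf := hd.isBoundedLipschitz_min_dist x₀ N
  have hmono : ∫ x, min (d x x₀) N ∂μ ≤ ∫ x, d x x₀ ∂μ :=
    integral_mono (hf.integrable μ) (h.integrable_dist hd x₀) fun x => min_le_left _ _
  linarith [h.integral_sub_le_sqrt hH hf]

theorem tpIneq (h : HasGaussianConcentration d A μ) (hA : 0 < A) (hd : IsMeasurablePseudoMetric d)
    {e : ℕ → X} (he : ∀ x, ∀ ε > 0, ∃ k, d x (e k) < ε) : TpIneq 1 d A μ := by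
  intro ν _
  by_cases hH : relEntropy ν μ = ∞
  · rw [hH, ENNReal.mul_top (by simpa using hA)]
    exact le_top
  have hdual (f : X → ℝ) (hf : IsBoundedLipschitz d f) :
      ∫ x, f x ∂μ - ∫ x, f x ∂ν ≤ √(2 * A * (relEntropy ν μ).toReal) := by
    simpa [integral_neg, neg_add_eq_sub] using h.integral_sub_le_sqrt hH (hf.neg hd.comm)
  have hW := hd.wassersteinDist_one_le_of_forall_integral_sub_le he (h.integrable_dist hd _)
    (h.integrable_dist_of_relEntropy_ne_top hd hH _) hdual
  calc wassersteinDist 1 d μ ν ^ 2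
      ≤ ENNReal.ofReal √(2 * A * (relEntropy ν μ).toReal) ^ 2 := by gcongr
    _ = ENNReal.ofReal (2 * A) * relEntropy ν μ := by
        rw [← ENNReal.ofReal_pow (Real.sqrt_nonneg _), Real.sq_sqrt (by positivity),
          ENNReal.ofReal_mul (by positivity), ENNReal.ofReal_toReal hH]

end HasGaussianConcentration

/-! ### Tensorization -/

section SumDist

variable {ι E : Type*} [Fintype ι] [PseudoMetricSpace E] [MeasurableSpace E]
  [OpensMeasurableSpace E] [SecondCountableTopology E] {L : ι → ℝ}

theorem isMeasurablePseudoMetric_weightedL1Dist (hL : ∀ i, 0 ≤ L i) :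
    IsMeasurablePseudoMetric (weightedL1Dist (E := E) L) where
  measurable := by
    unfold weightedL1Dist
    fun_prop
  self := weightedL1Dist_self L
  comm x y := by simp only [weightedL1Dist, dist_comm]
  triangle x y z := by
    simp only [weightedL1Dist, ← Finset.sum_add_distrib, ← mul_add]
    exact Finset.sum_le_sum fun i _ => mul_le_mul_of_nonneg_left (dist_triangle _ _ _) (hL i)

theorem HasGaussianConcentration.tpIneq_weightedL1Dist {μ : Measure (ι → E)}
    [IsProbabilityMeasure μ] {A : ℝ} (h : HasGaussianConcentration (weightedL1Dist L) A μ)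
    (hA : 0 < A) (hL : ∀ i, 0 ≤ L i) : TpIneq 1 (weightedL1Dist L) A μ := by
  have : Nonempty (ι → E) := μ.nonempty_of_neZero
  refine h.tpIneq hA (isMeasurablePseudoMetric_weightedL1Dist hL)
    (e := TopologicalSpace.denseSeq (ι → E)) fun x ε hε => ?_
  have hcont : Continuous (weightedL1Dist L x) := by
    unfold weightedL1Dist
    fun_prop
  exact (TopologicalSpace.denseRange_denseSeq (ι → E)).exists_mem_open
    (isOpen_lt hcont continuous_const) ⟨x, by simpa [weightedL1Dist_self] using hε⟩

end SumDist

section Weights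

variable {n : ℕ} {a : ℕ → ℝ}

theorem sum_Ioi_sub_le_sum_range (ha : ∀ j, 0 ≤ a j) (k : Fin n) :
    ∑ i ∈ Finset.Ioi k, a ((i : ℕ) - (k : ℕ)) ≤ ∑ m ∈ Finset.range n, a m := by
  have hinj : Set.InjOn (fun i : Fin n => (i : ℕ) - (k : ℕ)) (Finset.Ioi k) := by
    intro i hi j hj hij
    simp only [Finset.coe_Ioi, Set.mem_Ioi, Fin.lt_def] at hi hj hij
    exact Fin.ext (by omega)
  rw [← Finset.sum_image hinj]
  refine Finset.sum_le_sum_of_subset_of_nonneg (Finset.image_subset_iff.2 fun i _ => ?_)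
    fun m _ _ => ha m
  exact Finset.mem_range.2 (by omega)

theorem sum_Ioi_pow_mul_le {r S : ℝ} (hr0 : 0 ≤ r) (hr1 : r ≤ 1) (ha : ∀ j, 0 ≤ a j)
    (hS : ∑ m ∈ Finset.range n, a m ≤ S) (k : Fin n) :
    ∑ i ∈ Finset.Ioi k, r ^ (i : ℕ) * a ((i : ℕ) - (k : ℕ)) ≤ r * S * r ^ (k : ℕ) :=
  calc ∑ i ∈ Finset.Ioi k, r ^ (i : ℕ) * a ((i : ℕ) - (k : ℕ))
      ≤ ∑ i ∈ Finset.Ioi k, r ^ ((k : ℕ) + 1) * a ((i : ℕ) - (k : ℕ)) := by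
        refine Finset.sum_le_sum fun i hi => mul_le_mul_of_nonneg_right ?_ (ha _)
        exact pow_le_pow_of_le_one hr0 hr1 (Fin.lt_def.1 (Finset.mem_Ioi.1 hi))
    _ = r ^ ((k : ℕ) + 1) * ∑ i ∈ Finset.Ioi k, a ((i : ℕ) - (k : ℕ)) := by rw [Finset.mul_sum]
    _ ≤ r ^ ((k : ℕ) + 1) * S := by
        gcongr
        exact (sum_Ioi_sub_le_sum_range ha k).trans hS
    _ = r * S * r ^ (k : ℕ) := by ring

theorem exists_weights [NeZero n] (ha : ∀ j, 0 ≤ a j) {δ : ℝ} (hδ0 : 0 < δ) (hδ1 : δ ≤ 1) :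
    ∃ z : Fin n → ℝ, (∀ i, 0 < z i) ∧ ∑ i, z i = 1 ∧
      ∀ k : Fin n, ∑ i ∈ Finset.Ioi k, z i * a ((i : ℕ) - (k : ℕ)) ≤ δ * z k := by
  set S := 1 + ∑ m ∈ Finset.range n, a m
  have hS : 1 ≤ S := le_add_of_nonneg_right (Finset.sum_nonneg fun m _ => ha m)
  set r := δ / S
  have hr0 : 0 < r := by positivity
  have hr1 : r ≤ 1 := div_le_one_of_le₀ (hδ1.trans hS) (by positivity)
  have hrS : r * S = δ := div_mul_cancel₀ δ (by positivity)
  set Z := ∑ i : Fin n, r ^ (i : ℕ)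
  have hZ : 0 < Z := Finset.sum_pos (fun i _ => by positivity) Finset.univ_nonempty
  refine ⟨fun i => r ^ (i : ℕ) / Z, fun i => by positivity, ?_, fun k => ?_⟩
  · rw [← Finset.sum_div, div_self hZ.ne']
  · simp_rw [div_mul_eq_mul_div, ← Finset.sum_div, ← mul_div_assoc, ← hrS]
    gcongr
    exact sum_Ioi_pow_mul_le hr0.le hr1 ha (le_add_of_nonneg_left zero_le_one) k

end Weights

theorem sum_sq_le_iSup_of_sum_eq_one {ι : Type*} [Fintype ι] {z : ι → ℝ} (hz : ∀ i, 0 ≤ z i)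
    (hz1 : ∑ i, z i = 1) : ∑ i, z i ^ 2 ≤ ⨆ i, z i :=
  calc ∑ i, z i ^ 2 ≤ ∑ i, (⨆ i, z i) * z i := Finset.sum_le_sum fun i _ => by
        rw [sq]
        exact mul_le_mul_of_nonneg_right (le_ciSup (Set.finite_range z).bddAbove i) (hz i)
    _ = ⨆ i, z i := by rw [← Finset.mul_sum, hz1, mul_one]

section Tensorization

variable {E : Type*} [MeasurableSpace E] [PseudoMetricSpace E] [SecondCountableTopology E]
  [OpensMeasurableSpace E]

theorem tpIneq_chainMeasure_of_weights {C : ℝ} (hC : 0 < C) {n : ℕ} [NeZero n]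
    {K : (i : ℕ) → (Fin i → E) → Measure E}
    (hKm : ∀ i, Measurable (K i)) (hKp : ∀ i x, IsProbabilityMeasure (K i x))
    (hT : ∀ i x, TpIneq 1 dist C (K i x)) {a : ℕ → ℝ} (ha : ∀ j, 0 ≤ a j)
    (hW : ∀ (i : ℕ) (x x' : Fin i → E), wassersteinDist 1 dist (K i x) (K i x') ≤
      ENNReal.ofReal (∑ k : Fin i, a (i - (k : ℕ)) * dist (x k) (x' k)))
    {δ : ℝ} (hδ : δ < 1) {z : Fin n → ℝ} (hz : ∀ i, 0 < z i) (hz1 : ∑ i, z i = 1)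
    (hza : ∀ k : Fin n, ∑ i ∈ Finset.Ioi k, z i * a ((i : ℕ) - (k : ℕ)) ≤ δ * z k) :
    TpIneq 1 (fun x y : Fin n → E => ∑ i, dist (x i) (y i))
      (C * (⨆ i, z i) / ((1 - δ) * ⨅ i, z i) ^ 2) (chainMeasure K n) := by
  have := isProbabilityMeasure_chainMeasure hKm hKp n
  have hK (i : ℕ) (x : Fin i → E) : HasGaussianConcentration dist C (K i x) :=
    have := hKp i x
    (hT i x).hasGaussianConcentration dist_comm hC.le
  set b := (1 - δ) * ⨅ i, z i
  have hb : 0 < b := by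
    obtain ⟨i, hi⟩ := exists_eq_ciInf_of_finite (f := z)
    exact mul_pos (sub_pos.2 hδ) (hi ▸ hz i)
  have hbz (k : Fin n) : b ≤ (1 - δ) * z k :=
    mul_le_mul_of_nonneg_left (ciInf_le (Set.finite_range z).bddBelow k) (sub_nonneg.2 hδ.le)
  have hsup : 0 < ⨆ i, z i := (hz 0).trans_le (le_ciSup (Set.finite_range z).bddAbove 0)
  have hrow (k : Fin n) :
      1 + ∑ i ∈ Finset.Ioi k, z i / b * a ((i : ℕ) - (k : ℕ)) ≤ z k / b := by
    simp_rw [div_mul_eq_mul_div, ← Finset.sum_div]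
    rw [← div_self hb.ne', ← add_div]
    gcongr
    linarith [hbz k, hza k]
  have hsum : C * ∑ k, (z k / b) ^ 2 ≤ C * (⨆ i, z i) / b ^ 2 := by
    simp_rw [div_pow, ← Finset.sum_div, ← mul_div_assoc]
    gcongr
    exact sum_sq_le_iSup_of_sum_eq_one (fun i => (hz i).le) hz1
  have hconc := (hasGaussianConcentration_chainMeasure hKm hKp hK ha hW (L := fun _ => 1)
    (fun k => div_pos (hz k) hb) hrow).mono hsum
  rw [← weightedL1Dist_one]
  exact hconc.tpIneq_weightedL1Dist (by positivity) fun _ => zero_le_one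

theorem tensorization_T1_no_contraction_general {C : ℝ} (hC : 0 < C) {n : ℕ} [NeZero n]
    {K : (i : ℕ) → (Fin i → E) → Measure E}
    (hKm : ∀ i, Measurable (K i)) (hKp : ∀ i x, IsProbabilityMeasure (K i x))
    (hT : ∀ i x, TpIneq 1 dist C (K i x)) {a : ℕ → ℝ} (ha : ∀ j, 0 ≤ a j)
    (hW : ∀ (i : ℕ) (x x' : Fin i → E), wassersteinDist 1 dist (K i x) (K i x') ≤
      ENNReal.ofReal (∑ k : Fin i, a (i - (k : ℕ)) * dist (x k) (x' k))) :
    (∀ δ : ℝ, 0 < δ → δ < 1 →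
      (∃ z : Fin n → ℝ, (∀ i, 0 < z i) ∧ (∑ i, z i) = 1 ∧
        ∀ k : Fin n, (∑ i ∈ Finset.Ioi k, z i * a ((i : ℕ) - (k : ℕ))) ≤ δ * z k) ∧
      ∀ z : Fin n → ℝ, (∀ i, 0 < z i) → (∑ i, z i) = 1 →
        (∀ k : Fin n, (∑ i ∈ Finset.Ioi k, z i * a ((i : ℕ) - (k : ℕ))) ≤ δ * z k) →
        ∀ Q : Measure (Fin n → E), IsProbabilityMeasure Q →
          wassersteinDist 1 (fun x y : Fin n → E => ∑ i, dist (x i) (y i)) Q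
              (chainMeasure K n) ≤
            ENNReal.ofReal (1 / ((1 - δ) * ⨅ i, z i)) *
              (ENNReal.ofReal (2 * C * ⨆ i, z i) *
                relEntropy Q (chainMeasure K n)) ^ (1 / 2 : ℝ)) ∧
    ∃ Cn : ℝ, TpIneq 1 (fun x y : Fin n → E => ∑ i, dist (x i) (y i)) Cn
      (chainMeasure K n) := by
  constructor
  · refine fun δ hδ0 hδ1 => ⟨exists_weights ha hδ0 hδ1.le, fun z hz hz1 hza Q _ => ?_⟩
    have hT₁ := tpIneq_chainMeasure_of_weights hC hKm hKp hT ha hW hδ1 hz hz1 hza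
    set b := (1 - δ) * ⨅ i, z i
    have hb : 0 ≤ b := mul_nonneg (sub_nonneg.2 hδ1.le) (Real.iInf_nonneg fun i => (hz i).le)
    rw [wassersteinDist_one_comm (by simp [dist_comm]) (by fun_prop)]
    exact hT₁.wassersteinDist_le (one_div_nonneg.2 hb) (by clear_value b; ring)
  · obtain ⟨z, hz, hz1, hza⟩ := exists_weights (n := n) ha one_half_pos one_half_lt_one.le
    exact ⟨_, tpIneq_chainMeasure_of_weights hC hKm hKp hT ha hW one_half_lt_one hz hz1 hza⟩

end Tensorization

/-- **Remark 2.9: tensorization of `T₁` without the contraction condition.** -/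
theorem tensorization_T1_no_contraction
    {E : Type*} [MeasurableSpace E] [MetricSpace E] [CompleteSpace E]
    [SecondCountableTopology E] [BorelSpace E]
    (C : ℝ) (hC : 0 < C) (n : ℕ) [NeZero n]
    (K : (i : ℕ) → (Fin i → E) → Measure E)
    (hKm : ∀ i, Measurable (K i)) (hKp : ∀ i x, IsProbabilityMeasure (K i x))
    (hT : ∀ (i : ℕ) (x : Fin i → E), TpIneq 1 dist C (K i x))
    (a : ℕ → ℝ) (ha : ∀ j, 0 ≤ a j)
    (hC1 : ∀ (i : ℕ) (x x' : Fin i → E),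
      wassersteinDist 1 dist (K i x) (K i x') ≤
        ENNReal.ofReal (∑ k : Fin i, a (i - (k : ℕ)) * dist (x k) (x' k))) :
    (∀ δ : ℝ, 0 < δ → δ < 1 →
      (∃ z : Fin n → ℝ, (∀ i, 0 < z i) ∧ (∑ i, z i) = 1 ∧
        ∀ k : Fin n, (∑ i ∈ Finset.Ioi k, z i * a ((i : ℕ) - (k : ℕ))) ≤ δ * z k) ∧
      ∀ z : Fin n → ℝ, (∀ i, 0 < z i) → (∑ i, z i) = 1 →
        (∀ k : Fin n, (∑ i ∈ Finset.Ioi k, z i * a ((i : ℕ) - (k : ℕ))) ≤ δ * z k) →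
        ∀ Q : Measure (Fin n → E), IsProbabilityMeasure Q →
          wassersteinDist 1 (fun x y : Fin n → E => ∑ i, dist (x i) (y i)) Q
              (chainMeasure K n) ≤
            ENNReal.ofReal (1 / ((1 - δ) * ⨅ i, z i)) *
              (ENNReal.ofReal (2 * C * ⨆ i, z i) *
                relEntropy Q (chainMeasure K n)) ^ (1 / 2 : ℝ)) ∧
    ∃ Cn : ℝ, TpIneq 1 (fun x y : Fin n → E => ∑ i, dist (x i) (y i)) Cn
      (chainMeasure K n) :=
  tensorization_T1_no_contraction_general hC hKm hKp hT ha hC1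

end
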